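/- arXiv:0911.5023 — 6 statements merged into one kernel-verified Lean document; each statement's English description precedes it below -/
import Mathlib

section
/- Let F be a finite field. The field F((T)) of formal Laurent series over F, equipped with the topology induced by its canonical valuation (where an element Σ_{i≥n} a_i T^i with a_n ≠ 0 has absolute value q^{-n}, q = |F|), is a locally compact topological field (i.e. the Laurent series field over a finite field, with its valuation topology, is a locally compact space and a topological field). -/
/-!
The valuation ring of `F((T))` is `F⟦T⟧`, a discrete valuation ring whose residue field is `F`.
Since `F((T))` is complete, the ring of integers is closed in it, hence complete, and it is totally
bounded because the residue field is finite. The ring of integers is therefore a compact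
neighbourhood of `0`.
-/

open scoped Valued LaurentSeries PowerSeries

theorem nonempty_rankOne_of_isDiscreteValuationRing_integer {K Γ₀ : Type*} [Field K]
    [LinearOrderedCommGroupWithZero Γ₀] [MulArchimedean Γ₀] (v : Valuation K Γ₀)
    [IsDiscreteValuationRing v.integer] : Nonempty v.RankOne := by
  have : v.IsNontrivial :=
    v.isNontrivial_iff_not_a_field.mpr (IsDiscreteValuationRing.not_a_field v.integer)
  exact Valuation.nonempty_rankOne_iff_mulArchimedean.mpr <|
    .comap MonoidWithZeroHom.ValueGroup₀.embedding.toMonoidHom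
      MonoidWithZeroHom.ValueGroup₀.embedding_strictMono

open Valued.integer in
theorem locallyCompactSpace_of_isDiscreteValuationRing_of_finite_residueField {K Γ₀ : Type*}
    [Field K] [LinearOrderedCommGroupWithZero Γ₀] [MulArchimedean Γ₀] [Valued K Γ₀]
    [CompleteSpace K] [IsDiscreteValuationRing 𝒪[K]] [Finite 𝓀[K]] : LocallyCompactSpace K := by
  obtain ⟨_⟩ := nonempty_rankOne_of_isDiscreteValuationRing_integer (Valued.v : Valuation K Γ₀)
  have : ProperSpace K :=
    properSpace_iff_completeSpace_and_isDiscreteValuationRing_integer_and_finite_residueField.mpr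
      ⟨inferInstance, inferInstance, inferInstance⟩
  infer_instance

section LaurentSeries

variable (F : Type*) [Field F]

/-- The identification of `F⟦X⟧` with the valuation ring of `F⸨X⸩`, given by the inclusion of power
series into Laurent series. -/
noncomputable def powerSeriesEquivInteger : F⟦X⟧ ≃+* 𝒪[F⸨X⸩] :=
  RingEquiv.ofBijective
    ((HahnSeries.ofPowerSeries ℤ F).codRestrict 𝒪[F⸨X⸩] fun f ↦
      (LaurentSeries.val_le_one_iff_eq_coe F _).mpr ⟨f, rfl⟩)
    ⟨fun _ _ h ↦ HahnSeries.ofPowerSeries_injective (congrArg Subtype.val h),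
      fun x ↦ ((LaurentSeries.val_le_one_iff_eq_coe F x).mp x.2).imp fun _ ↦ Subtype.ext⟩

/-- The residue field of `F⸨X⸩` is the field of constants, via the constant coefficient. -/
noncomputable def laurentSeriesResidueFieldEquiv : 𝓀[F⸨X⸩] ≃+* F :=
  (IsLocalRing.ResidueField.mapEquiv (powerSeriesEquivInteger F)).symm.trans
    PowerSeries.residueFieldOfPowerSeries

instance isDiscreteValuationRing_integer_laurentSeries : IsDiscreteValuationRing 𝒪[F⸨X⸩] :=
  IsDiscreteValuationRing.RingEquivClass.isDiscreteValuationRing (powerSeriesEquivInteger F)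

instance finite_residueField_laurentSeries [Finite F] : Finite 𝓀[F⸨X⸩] :=
  .of_equiv F (laurentSeriesResidueFieldEquiv F).symm.toEquiv

end LaurentSeries

/-- The field of formal Laurent series over a finite field, equipped with the topology
induced by its canonical (`X`-adic) valuation, is a locally compact topological field. -/
theorem laurentSeries_locallyCompact_topologicalField
    (F : Type*) [Field F] [Fintype F] :
    LocallyCompactSpace (LaurentSeries F) ∧ IsTopologicalDivisionRing (LaurentSeries F) :=
  ⟨locallyCompactSpace_of_isDiscreteValuationRing_of_finite_residueField, inferInstance⟩
end

section
/- Let F be a finite field with q elements, n ≥ 1, R = F[T]/(T^n), and V = (R → ℂ). For g : R → ℂ let M_g ∈ End_ℂ(V) be (M_g f)(x) = g(x) f(x); for a ∈ R let L_a ∈ End_ℂ(V) be (L_a f)(x) = f(x − a); and for b ∈ Fˣ let π(b) ∈ End_ℂ(V) be (π(b) f)(x) = f(b⁻¹ x), where Fˣ acts on R by multiplication by constants. Then the ℂ-subalgebra of the algebra End_ℂ(V) ⊗_ℂ ℂ[Fˣ] (tensor product with the complex group algebra of Fˣ) generated by the elements M_g ⊗ 1 (g : R → ℂ), L_a ⊗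 1 (a ∈ R), and π(b) ⊗ b (b ∈ Fˣ) is the whole algebra End_ℂ(V) ⊗_ℂ ℂ[Fˣ]. -/
open TensorProduct

/-- The ring `R = F[T]/(T^n)`. -/
abbrev truncRing (F : Type*) [Field F] (n : ℕ) :=
  Polynomial F ⧸ Ideal.span {(Polynomial.X : Polynomial F) ^ n}

/-- The translation operator `(L_a f)(x) = f (x - a)` on `V = (G → ℂ)`. -/
noncomputable def translationOp {G : Type*} [AddCommGroup G] (a : G) :
    Module.End ℂ (G → ℂ) where
  toFun f := fun x => f (x - a)
  map_add' _ _ := rfl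
  map_smul' _ _ := rfl

/-- The multiplication operator `(M_g f)(x) = g x * f x` on `V = (G → ℂ)`. -/
noncomputable def mulOp {G : Type*} [AddCommGroup G] (g : G → ℂ) :
    Module.End ℂ (G → ℂ) where
  toFun f := fun x => g x * f x
  map_add' f₁ f₂ := by funext x; simp [mul_add]
  map_smul' c f := by funext x; simp [smul_eq_mul]; ring

/-- The operator `(π(b) f)(x) = f (b⁻¹ x)` on `V = (R → ℂ)`, `R = F[T]/(T^n)`,
where `Fˣ` acts on `R` by multiplication by constants. -/
noncomputable def scaleOp (F : Type*) [Field F] (n : ℕ) (b : Fˣ) :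
    Module.End ℂ (truncRing F n → ℂ) where
  toFun f := fun x => f (algebraMap F (truncRing F n) ((b⁻¹ : Fˣ) : F) * x)
  map_add' _ _ := rfl
  map_smul' _ _ := rfl

/-!
On functions on a finite abelian group `G`, the operator with matrix `A x y` is
`∑ a, M_{x ↦ A x (x - a)} L_a`, so the multiplication and translation operators already generate
the full endomorphism algebra. The generated subalgebra therefore contains `End_ℂ(V) ⊗ 1`, and
multiplying `π(b) ⊗ b` by `π(b)⁻¹ ⊗ 1` untwists it to `1 ⊗ b`.
-/

section TensorProduct

open Algebra.TensorProduct

variable {k A B : Type*} [CommSemiring k] [Semiring A] [Algebra k A] [Semiring B] [Algebra k B]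

theorem subalgebra_tensorProduct_eq_top_of_range_le {S : Subalgebra k (A ⊗[k] B)}
    (hleft : (includeLeft : A →ₐ[k] A ⊗[k] B).range ≤ S)
    (hright : (includeRight : B →ₐ[k] A ⊗[k] B).range ≤ S) : S = ⊤ := by
  rw [eq_top_iff, ← adjoin_tmul_eq_top, Algebra.adjoin_le_iff]
  rintro _ ⟨a, b, rfl⟩
  have htmul : a ⊗ₜ[k] b = (a ⊗ₜ[k] 1) * (1 ⊗ₜ[k] b) := by
    rw [tmul_mul_tmul, mul_one, one_mul]
  rw [htmul]
  exact mul_mem (hleft ⟨a, rfl⟩) (hright ⟨b, rfl⟩)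

theorem subalgebra_tensorProduct_eq_top_of_isUnit_tmul_mem {ι : Type*} {u : ι → A} {b : ι → B}
    (hu : ∀ i, IsUnit (u i)) (hb : Algebra.adjoin k (Set.range b) = ⊤)
    {S : Subalgebra k (A ⊗[k] B)}
    (hleft : (includeLeft : A →ₐ[k] A ⊗[k] B).range ≤ S)
    (hmem : ∀ i, u i ⊗ₜ[k] b i ∈ S) : S = ⊤ := by
  refine subalgebra_tensorProduct_eq_top_of_range_le hleft ?_
  rw [← Algebra.map_top, ← hb, AlgHom.map_adjoin, Algebra.adjoin_le_iff]
  rintro _ ⟨_, ⟨i, rfl⟩, rfl⟩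
  obtain ⟨v, hv⟩ := (hu i).exists_left_inv
  have huntwist : (v ⊗ₜ[k] 1) * (u i ⊗ₜ[k] b i) = 1 ⊗ₜ[k] b i := by
    rw [tmul_mul_tmul, hv, one_mul]
  rw [includeRight_apply, ← huntwist]
  exact mul_mem (hleft ⟨v, rfl⟩) (hmem i)

end TensorProduct

theorem adjoin_range_monoidAlgebra_of (k H : Type*) [CommSemiring k] [Monoid H] :
    Algebra.adjoin k (Set.range (MonoidAlgebra.of k H)) = ⊤ := by
  refine eq_top_iff.mpr fun x _ => ?_
  induction x using MonoidAlgebra.induction_on with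
  | of h => exact Algebra.subset_adjoin ⟨h, rfl⟩
  | add x y hx hy => exact add_mem (hx trivial) (hy trivial)
  | smul r x hx => exact Subalgebra.smul_mem _ (hx trivial) r

section FunctionOperators

variable {G : Type*} [AddCommGroup G]

theorem eq_sum_mulOp_mul_translationOp [Fintype G] [DecidableEq G]
    (A : Module.End ℂ (G → ℂ)) :
    A = ∑ a : G, mulOp (fun x => A (Pi.single (x - a) 1) x) * translationOp a := by
  refine LinearMap.ext fun f => funext fun x => ?_
  calc A f x = ∑ y, f y * A (Pi.single y 1) x := by
        conv_lhs => rw [pi_eq_sum_univ' f]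
        simp only [map_sum, map_smul, Finset.sum_apply, Pi.smul_apply, smul_eq_mul]
    _ = ∑ a, A (Pi.single (x - a) 1) x * f (x - a) := by
        rw [← (Equiv.subLeft x).sum_comp]
        simp only [Equiv.subLeft_apply, mul_comm]
    _ = (∑ a, mulOp (fun x => A (Pi.single (x - a) 1) x) * translationOp a) f x := by
        rw [LinearMap.sum_apply, Finset.sum_apply]
        rfl

theorem adjoin_range_mulOp_union_range_translationOp [Finite G] :
    Algebra.adjoin ℂ (Set.range (mulOp (G := G)) ∪ Set.range translationOp) = ⊤ := by
  classical
  cases nonempty_fintype G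
  refine eq_top_iff.mpr fun A _ => ?_
  rw [eq_sum_mulOp_mul_translationOp A]
  exact sum_mem fun a _ => mul_mem (Algebra.subset_adjoin (.inl ⟨_, rfl⟩))
    (Algebra.subset_adjoin (.inr ⟨a, rfl⟩))

theorem adjoin_affine_ops_tensor_groupAlgebra_eq_top_general [Finite G] {H : Type*} [Monoid H]
    {π : H → Module.End ℂ (G → ℂ)} (hπ : ∀ h, IsUnit (π h)) :
    Algebra.adjoin ℂ
        {x : Module.End ℂ (G → ℂ) ⊗[ℂ] MonoidAlgebra ℂ H |
          (∃ g : G → ℂ, x = mulOp g ⊗ₜ[ℂ] 1) ∨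
          (∃ a : G, x = translationOp a ⊗ₜ[ℂ] 1) ∨
          (∃ h : H, x = π h ⊗ₜ[ℂ] MonoidAlgebra.of ℂ H h)} = ⊤ := by
  refine subalgebra_tensorProduct_eq_top_of_isUnit_tmul_mem hπ
    (adjoin_range_monoidAlgebra_of ℂ H) ?_
    fun h => Algebra.subset_adjoin (.inr (.inr ⟨h, rfl⟩))
  rw [← Algebra.map_top, ← adjoin_range_mulOp_union_range_translationOp, AlgHom.map_adjoin]
  apply Algebra.adjoin_mono
  rintro _ ⟨_, ⟨g, rfl⟩ | ⟨a, rfl⟩, rfl⟩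
  · exact .inl ⟨g, rfl⟩
  · exact .inr (.inl ⟨a, rfl⟩)

end FunctionOperators

section TruncRing

variable (F : Type*) [Field F] (n : ℕ)

theorem finite_truncRing [Finite F] : Finite (truncRing F n) :=
  have : Module.Finite F (truncRing F n) := (Polynomial.monic_X_pow n).finite_quotient
  Module.finite_of_finite F

theorem scaleOp_one : scaleOp F n 1 = 1 := by
  refine LinearMap.ext fun f => funext fun x => ?_
  simp [scaleOp]

theorem scaleOp_mul (b c : Fˣ) : scaleOp F n (b * c) = scaleOp F n b * scaleOp F n c := by
  refine LinearMap.ext fun f => funext fun x => ?_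
  simp [scaleOp, mul_assoc]

theorem isUnit_scaleOp (b : Fˣ) : IsUnit (scaleOp F n b) :=
  isUnit_iff_exists.mpr ⟨scaleOp F n b⁻¹,
    by rw [← scaleOp_mul, mul_inv_cancel, scaleOp_one],
    by rw [← scaleOp_mul, inv_mul_cancel, scaleOp_one]⟩

end TruncRing

/-- For `R = F[T]/(T^n)`, `n ≥ 1`, the `ℂ`-subalgebra of `End_ℂ(R → ℂ) ⊗_ℂ ℂ[Fˣ]` generated
by the elements `M_g ⊗ 1`, `L_a ⊗ 1` and `π(b) ⊗ b` is the whole algebra. -/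
theorem adjoin_affine_ops_tensor_groupAlgebra_eq_top (F : Type*) [Field F] [Fintype F]
    (n : ℕ) (hn : 1 ≤ n) :
    Algebra.adjoin ℂ
        ({x : Module.End ℂ (truncRing F n → ℂ) ⊗[ℂ] MonoidAlgebra ℂ Fˣ |
          (∃ g : truncRing F n → ℂ, x = mulOp g ⊗ₜ[ℂ] 1) ∨
          (∃ a : truncRing F n, x = translationOp a ⊗ₜ[ℂ] 1) ∨
          (∃ b : Fˣ, x = scaleOp F n b ⊗ₜ[ℂ] MonoidAlgebra.of ℂ Fˣ b)}) = ⊤ :=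
  have := finite_truncRing F n
  adjoin_affine_ops_tensor_groupAlgebra_eq_top_general (isUnit_scaleOp F n)
end

section
/- Let F be a finite field with q elements. On the Hilbert space ℓ²(F[T]) with canonical orthonormal basis (ξ_r)_{r ∈ F[T]}, let U^a for a ∈ F[T] be the unitary determined by U^a ξ_r = ξ_{a+r}, and let S_T be the isometry determined by S_T ξ_r = ξ_{T·r}. Then the q isometries U^c S_T, c ∈ F (constants), have mutually orthogonal ranges, i.e. (U^c S_T)* (U^{c'} S_T) = 0 for c ≠ c' in F, and their range projections sum to the identity: Σ_{c ∈ F} (U^c S_T)(U^c S_T)* = 1. -/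
open scoped Classical

/-- The Hilbert space `ℓ²(F[T])`. -/
noncomputable abbrev l2Poly (F : Type*) [Field F] := lp (fun _ : Polynomial F => ℂ) 2

/-!
An operator `V` with `V ξ_i = ξ_{σ i}` has adjoint `f ↦ f ∘ σ`. Hence operators along maps with
disjoint ranges have orthogonal ranges, and if the ranges of injective maps `σ_c` partition the
index set, then the projections `V_c V_c*` sum to `1`. The maps `r ↦ c + T r` are of this kind:
every polynomial is uniquely `c + T r`, with `c` its constant coefficient.
-/

open Polynomial ContinuousLinearMap

section SquareSummable

variable {𝕜 ι κ μ γ : Type*} [RCLike 𝕜] [DecidableEq ι] [DecidableEq κ] [DecidableEq μ]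

theorem continuousLinearMap_ext_lp_single_one {E : Type*} [AddCommMonoid E] [Module 𝕜 E]
    [TopologicalSpace E] [T2Space E] {A B : lp (fun _ : ι => 𝕜) 2 →L[𝕜] E}
    (h : ∀ i, A (lp.single 2 i 1) = B (lp.single 2 i 1)) : A = B :=
  lp.ext_continuousLinearMap ENNReal.ofNat_ne_top fun i => ext_ring (h i)

/-- The operator `V : ℓ²(ι) → ℓ²(κ)` sends the canonical orthonormal basis of `ℓ²(ι)` to that of
`ℓ²(κ)` along `σ`, i.e. `V ξ_i = ξ_{σ i}`. It is a predicate rather than a construction because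
not every `σ` is induced by a bounded operator. -/
def MapsBasisAlong (V : lp (fun _ : ι => 𝕜) 2 →L[𝕜] lp (fun _ : κ => 𝕜) 2) (σ : ι → κ) : Prop :=
  ∀ i, V (lp.single 2 i 1) = lp.single 2 (σ i) 1

namespace MapsBasisAlong

variable {V : lp (fun _ : ι => 𝕜) 2 →L[𝕜] lp (fun _ : κ => 𝕜) 2} {σ : ι → κ}

theorem comp {W : lp (fun _ : κ => 𝕜) 2 →L[𝕜] lp (fun _ : μ => 𝕜) 2} {τ : κ → μ}
    (hW : MapsBasisAlong W τ) (hV : MapsBasisAlong V σ) : MapsBasisAlong (W ∘L V) (τ ∘ σ) :=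
  fun i => by rw [comp_apply, hV, hW, Function.comp_apply]

theorem adjoint_apply (hV : MapsBasisAlong V σ) (f : lp (fun _ : κ => 𝕜) 2) (i : ι) :
    adjoint V f i = f (σ i) :=
  calc adjoint V f i = inner 𝕜 (lp.single 2 i 1) (adjoint V f) := by
        rw [lp.inner_single_left, RCLike.inner_apply, map_one, mul_one]
    _ = inner 𝕜 (lp.single 2 (σ i) 1) f := by rw [adjoint_inner_right, hV]
    _ = f (σ i) := by rw [lp.inner_single_left, RCLike.inner_apply, map_one, mul_one]

theorem adjoint_single_of_injective (hV : MapsBasisAlong V σ) (hσ : σ.Injective) (i : ι) :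
    adjoint V (lp.single 2 (σ i) 1) = lp.single 2 i 1 := by
  ext j
  rw [hV.adjoint_apply, lp.single_apply, lp.single_apply, Pi.single_apply, Pi.single_apply]
  simp only [hσ.eq_iff]

theorem adjoint_single_of_notMem_range (hV : MapsBasisAlong V σ) {k : κ} (hk : k ∉ Set.range σ) :
    adjoint V (lp.single 2 k 1) = 0 := by
  ext i
  rw [hV.adjoint_apply, lp.single_apply_ne _ _ _ fun h => hk ⟨i, h⟩, lp.coeFn_zero, Pi.zero_apply]

theorem adjoint_comp_eq_zero {W : lp (fun _ : μ => 𝕜) 2 →L[𝕜] lp (fun _ : κ => 𝕜) 2} {τ : μ → κ}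
    (hV : MapsBasisAlong V σ) (hW : MapsBasisAlong W τ)
    (hdisj : Disjoint (Set.range σ) (Set.range τ)) : adjoint V ∘L W = 0 :=
  continuousLinearMap_ext_lp_single_one fun m => by
    have hm : τ m ∉ Set.range σ := hdisj.notMem_of_mem_right (Set.mem_range_self m)
    rw [comp_apply, hW, hV.adjoint_single_of_notMem_range hm, zero_apply]

theorem sum_comp_adjoint_eq_one [Fintype γ]
    {V : γ → lp (fun _ : ι => 𝕜) 2 →L[𝕜] lp (fun _ : κ => 𝕜) 2} {σ : γ → ι → κ}
    (hV : ∀ c, MapsBasisAlong (V c) (σ c)) (hinj : ∀ c, (σ c).Injective)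
    (hdisj : Pairwise fun c c' => Disjoint (Set.range (σ c)) (Set.range (σ c')))
    (hcover : ∀ k, ∃ c, k ∈ Set.range (σ c)) : ∑ c, V c ∘L adjoint (V c) = 1 := by
  refine continuousLinearMap_ext_lp_single_one fun k => ?_
  obtain ⟨c, i, rfl⟩ := hcover k
  have hother : ∀ c' ≠ c, (V c' ∘L adjoint (V c')) (lp.single 2 (σ c i) 1) = 0 := fun c' hc' => by
    have hi : σ c i ∉ Set.range (σ c') :=
      (hdisj hc').notMem_of_mem_right (Set.mem_range_self i)
    rw [comp_apply, (hV c').adjoint_single_of_notMem_range hi, map_zero]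
  rw [sum_apply, Fintype.sum_eq_single c hother, comp_apply,
    (hV c).adjoint_single_of_injective (hinj c), hV, one_apply_eq_self]

end MapsBasisAlong

end SquareSummable

section Polynomial

variable {R : Type*} [Semiring R]

theorem injective_C_add_X_mul (c : R) : Function.Injective fun r : R[X] => C c + X * r :=
  fun r s h => Polynomial.ext fun n => by simpa [coeff_C] using congrArg (coeff · (n + 1)) h

theorem disjoint_range_C_add_X_mul {c c' : R} (h : c ≠ c') :
    Disjoint (Set.range fun r : R[X] => C c + X * r) (Set.range fun r : R[X] => C c' + X * r) := by
  rw [Set.disjoint_left]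
  rintro _ ⟨r, rfl⟩ ⟨s, hs⟩
  exact h (by simpa using (congrArg (coeff · 0) hs).symm)

theorem exists_mem_range_C_add_X_mul (p : R[X]) :
    ∃ c : R, p ∈ Set.range fun r : R[X] => C c + X * r :=
  ⟨p.coeff 0, p.divX, (add_comm _ _).trans p.X_mul_divX_add⟩

end Polynomial

theorem ringCstarAlgebra_cuntz_relations_general {𝕜 R : Type*} [RCLike 𝕜] [Semiring R] [Fintype R]
    (U : R[X] → lp (fun _ : R[X] => 𝕜) 2 →L[𝕜] lp (fun _ : R[X] => 𝕜) 2)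
    (S : lp (fun _ : R[X] => 𝕜) 2 →L[𝕜] lp (fun _ : R[X] => 𝕜) 2)
    (hU : ∀ a, MapsBasisAlong (U a) (a + ·)) (hS : MapsBasisAlong S (X * ·)) :
    (∀ c c' : R, c ≠ c' → adjoint (U (C c) * S) * (U (C c') * S) = 0) ∧
      ∑ c : R, (U (C c) * S) * adjoint (U (C c) * S) = 1 := by
  have hUS : ∀ c : R, MapsBasisAlong (U (C c) * S) fun r => C c + X * r :=
    fun c => (hU (C c)).comp hS
  exact ⟨fun c c' hcc' => (hUS c).adjoint_comp_eq_zero (hUS c') (disjoint_range_C_add_X_mul hcc'),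
    MapsBasisAlong.sum_comp_adjoint_eq_one hUS injective_C_add_X_mul
      (fun _ _ => disjoint_range_C_add_X_mul) exists_mem_range_C_add_X_mul⟩

/-- On `ℓ²(F[T])`, with `U^a` the unitary determined by `U^a ξ_r = ξ_{a+r}` and `S_T` the
isometry determined by `S_T ξ_r = ξ_{T r}`, the `q` isometries `U^c S_T` (`c ∈ F`) have
mutually orthogonal ranges, and their range projections sum to the identity. -/
theorem ringCstarAlgebra_cuntz_relations (F : Type*) [Field F] [Fintype F]
    (U : Polynomial F → (l2Poly F →L[ℂ] l2Poly F)) (S : l2Poly F →L[ℂ] l2Poly F)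
    (hU : ∀ a r : Polynomial F, U a (lp.single 2 r 1) = lp.single 2 (a + r) 1)
    (hS : ∀ r : Polynomial F, S (lp.single 2 r 1) = lp.single 2 (Polynomial.X * r) 1) :
    (∀ c c' : F, c ≠ c' →
      ContinuousLinearMap.adjoint (U (Polynomial.C c) * S) * (U (Polynomial.C c') * S) = 0) ∧
    (∑ c : F, (U (Polynomial.C c) * S) *
        ContinuousLinearMap.adjoint (U (Polynomial.C c) * S) = 1) :=
  ringCstarAlgebra_cuntz_relations_general U S hU hS
end

section
/- Let F be a finite field with q elements, let b be a generator of the cyclic group Fˣ, and let ζ ∈ ℂ be a primitive (q−1)-th root of unity. On ℓ²(F[T]) with the operators U^a (U^a ξ_r = ξ_{a+r}) and S_c (S_c ξ_r = ξ_{c r} for c ≠ 0), define for k = 0, …, q−2 the operator W_k := (q−1)^{-1/2} Σ_{n=0}^{q−2} ζ^{−kn} U^{b^n} S_T, where b^n ∈ F is viewed as a constant polynomial. Then S_T and W_0, …, W_{q−2} are q isometries whose range projections are mutually orthogonal and sum to the identity (S_T S_T* + Σ_{k=0}^{q−2} W_k W_k* = 1), and conjugation by the unitary S_b satisfies S_b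 S_T S_b* = S_T and S_b W_k S_b* = ζ^{k} W_k for all k. -/
open scoped Classical

/-- The isometry `W_k = (q-1)^{-1/2} Σ_{n=0}^{q-2} ζ^{-kn} U^{b^n} S_T`. -/
noncomputable def Wop (F : Type*) [Field F] [Fintype F]
    (U : Polynomial F → (l2Poly F →L[ℂ] l2Poly F))
    (S : Polynomial F → (l2Poly F →L[ℂ] l2Poly F)) (b : Fˣ) (ζ : ℂ) (k : ℕ) :
    l2Poly F →L[ℂ] l2Poly F :=
  ((Real.sqrt ((Fintype.card F : ℝ) - 1) : ℂ))⁻¹ •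
    ∑ n ∈ Finset.range (Fintype.card F - 1),
      (ζ ^ (k * n))⁻¹ • (U (Polynomial.C ((b ^ n : Fˣ) : F)) * S Polynomial.X)

/-!
Every polynomial is uniquely of the form `a + T r` with `a ∈ F`, so the isometries `U^a S_T`, each
of which maps the canonical basis injectively into itself, have ranges that decompose `ℓ²(F[T])`.
Equivalently, the row of operators `(U^a S_T)_a` is a unitary `1 × q` matrix. Listing `F` as `0`
followed by the powers of `b`, the row `(S_T, W_0, …, W_{q-2})` is this row multiplied by the
unitary matrix `1 ⊕ D`, where `D` is the normalized Fourier matrix of `ζ`, so it is again unitary.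
Finally, `S_b` commutes with `S_T` and `S_b U^a S_b* = U^{ba}`, so conjugation by `S_b` shifts the
index `n` of `U^{b^n} S_T` cyclically and acts on the Fourier transform `W_k` by `ζ^k`.
-/

open Polynomial Matrix

section CuntzFamily

/-- A finite Cuntz family in a `*`-ring: isometries with mutually orthogonal ranges whose range
projections sum to `1`. -/
structure IsCuntzFamily {ι A : Type*} [Fintype ι] [DecidableEq ι] [Semiring A] [StarRing A]
    (V : ι → A) : Prop where
  star_mul : ∀ i j, star (V i) * V j = if i = j then 1 else 0
  sum_mul_star : ∑ i, V i * star (V i) = 1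

namespace IsCuntzFamily

variable {ι κ A : Type*} [Fintype ι] [DecidableEq ι] [Fintype κ] [DecidableEq κ]
  [Semiring A] [StarRing A] {V : ι → A}

theorem star_mul_self (hV : IsCuntzFamily V) (i : ι) : star (V i) * V i = 1 := by
  rw [hV.star_mul, if_pos rfl]

theorem range_mul_range_of_ne (hV : IsCuntzFamily V) {i j : ι} (hij : i ≠ j) :
    (V i * star (V i)) * (V j * star (V j)) = 0 := by
  rw [mul_assoc, ← mul_assoc (star (V i)), hV.star_mul, if_neg hij, zero_mul, mul_zero]

theorem iff_replicateRow_unitary :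
    IsCuntzFamily V ↔
      (replicateRow Unit V)ᴴ * replicateRow Unit V = 1 ∧
        replicateRow Unit V * (replicateRow Unit V)ᴴ = 1 := by
  have columns : (replicateRow Unit V)ᴴ * replicateRow Unit V = 1 ↔
      ∀ i j, star (V i) * V j = if i = j then 1 else 0 := by
    simp [← Matrix.ext_iff, Matrix.mul_apply, Matrix.one_apply]
  have rows : replicateRow Unit V * (replicateRow Unit V)ᴴ = 1 ↔
      ∑ i, V i * star (V i) = 1 := by
    simp [← Matrix.ext_iff, Matrix.mul_apply]
  rw [columns, rows]
  exact ⟨fun hV => ⟨hV.star_mul, hV.sum_mul_star⟩, fun hV => ⟨hV.1, hV.2⟩⟩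

theorem sum_smul {R : Type*} [CommSemiring R] [StarRing R] [Algebra R A] [StarModule R A]
    (hV : IsCuntzFamily V) {u : Matrix ι κ R} (hu : uᴴ * u = 1) (hu' : u * uᴴ = 1) :
    IsCuntzFamily fun k => ∑ i, u i k • V i := by
  rw [iff_replicateRow_unitary] at hV ⊢
  let M : Matrix ι κ A := u.map (algebraMap R A)
  have row_eq : replicateRow Unit (fun k => ∑ i, u i k • V i) = replicateRow Unit V * M := by
    ext _ k
    simp [M, Matrix.mul_apply, Algebra.smul_def, Algebra.commutes]
  have conjTranspose_M : Mᴴ = uᴴ.map (algebraMap R A) :=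
    (conjTranspose_map _ fun x => algebraMap_star_comm x).symm
  have M_isometry : Mᴴ * M = 1 := by
    rw [conjTranspose_M, ← Matrix.map_mul, hu, Matrix.map_one _ (map_zero _) (map_one _)]
  have M_coisometry : M * Mᴴ = 1 := by
    rw [conjTranspose_M, ← Matrix.map_mul, hu', Matrix.map_one _ (map_zero _) (map_one _)]
  rw [row_eq, conjTranspose_mul]
  constructor
  · rw [Matrix.mul_assoc, ← Matrix.mul_assoc _ _ M, hV.1, Matrix.one_mul, M_isometry]
  · rw [Matrix.mul_assoc, ← Matrix.mul_assoc M, M_coisometry, Matrix.one_mul, hV.2]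

theorem sumElim_sum_smul {R : Type*} [CommRing R] [StarRing R] [Algebra R A] [StarModule R A]
    {T : A} (hV : IsCuntzFamily (Sum.elim (fun _ : Unit => T) V)) {u : Matrix ι ι R}
    (hu : u ∈ unitaryGroup ι R) :
    IsCuntzFamily (Sum.elim (fun _ : Unit => T) fun k => ∑ i, u i k • V i) := by
  have isometry : uᴴ * u = 1 := mem_unitaryGroup_iff'.mp hu
  have coisometry : u * uᴴ = 1 := mem_unitaryGroup_iff.mp hu
  convert hV.sum_smul (u := fromBlocks (1 : Matrix Unit Unit R) 0 0 u)
    (by simp [fromBlocks_conjTranspose, fromBlocks_multiply, isometry])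
    (by simp [fromBlocks_conjTranspose, fromBlocks_multiply, coisometry]) using 1
  funext k
  rcases k with _ | k <;> simp

end IsCuntzFamily

end CuntzFamily

section Fourier

/-- The Fourier matrix of size `m` attached to `ζ`, normalized by `m^{-1/2}` so that it is unitary
when `ζ` is a primitive `m`-th root of unity. -/
noncomputable def fourierMatrix (m : ℕ) (ζ : ℂ) : Matrix (Fin m) (Fin m) ℂ :=
  of fun n k => ((√(m : ℝ) : ℝ) : ℂ)⁻¹ * (ζ ^ ((k : ℕ) * n))⁻¹

theorem sum_div_pow_of_isPrimitiveRoot {K : Type*} [Field K] {m : ℕ} {ζ : K}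
    (hζ : IsPrimitiveRoot ζ m) (k l : Fin m) :
    ∑ n : Fin m, (ζ ^ (k : ℕ) / ζ ^ (l : ℕ)) ^ (n : ℕ) = if k = l then (m : K) else 0 := by
  have ζ_ne_zero : ζ ≠ 0 := hζ.ne_zero k.pos.ne'
  rw [Fin.sum_univ_eq_sum_range (fun n => (ζ ^ (k : ℕ) / ζ ^ (l : ℕ)) ^ n)]
  split_ifs with hkl
  · simp [hkl, ζ_ne_zero]
  · have ratio_ne_one : ζ ^ (k : ℕ) / ζ ^ (l : ℕ) ≠ 1 := fun h =>
      hkl <| Fin.ext <| hζ.pow_inj k.2 l.2 <| (div_eq_one_iff_eq (pow_ne_zero _ ζ_ne_zero)).mp h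
    have ratio_pow : (ζ ^ (k : ℕ) / ζ ^ (l : ℕ)) ^ m = 1 := by
      rw [div_pow, pow_right_comm, pow_right_comm ζ l, hζ.pow_eq_one, one_pow, one_pow, div_one]
    rw [geom_sum_eq ratio_ne_one, ratio_pow, sub_self, zero_div]

theorem fourierMatrix_mem_unitaryGroup {m : ℕ} {ζ : ℂ} (hζ : IsPrimitiveRoot ζ m) :
    fourierMatrix m ζ ∈ unitaryGroup (Fin m) ℂ := by
  rw [mem_unitaryGroup_iff']
  ext k l
  have m_ne_zero : (m : ℂ) ≠ 0 := Nat.cast_ne_zero.mpr k.pos.ne'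
  have star_ζ : star ζ = ζ⁻¹ := (Complex.inv_eq_conj (hζ.norm'_eq_one k.pos.ne')).symm
  have sqrt_mul_sqrt : ((√(m : ℝ) : ℝ) : ℂ) * ((√(m : ℝ) : ℝ) : ℂ) = m := by
    rw [← Complex.ofReal_mul, Real.mul_self_sqrt m.cast_nonneg, Complex.ofReal_natCast]
  have entry (n : Fin m) : star (fourierMatrix m ζ n k) * fourierMatrix m ζ n l =
      (m : ℂ)⁻¹ * (ζ ^ (k : ℕ) / ζ ^ (l : ℕ)) ^ (n : ℕ) := by
    rw [← sqrt_mul_sqrt]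
    simp only [fourierMatrix, of_apply, star_mul', star_inv₀, RCLike.star_def, Complex.conj_ofReal,
      star_pow, star_ζ, inv_pow, inv_inv, _root_.mul_inv_rev, div_pow, ← pow_mul]
    ring
  simp only [star_eq_conjTranspose, Matrix.mul_apply, conjTranspose_apply, entry]
  rw [← Finset.mul_sum, sum_div_pow_of_isPrimitiveRoot hζ, Matrix.one_apply, mul_ite, mul_zero,
    inv_mul_cancel₀ m_ne_zero]

theorem map_sum_inv_pow_smul {K M : Type*} [Field K] [AddCommGroup M] [Module K M] {m : ℕ} {μ : K}
    (hμ : μ ^ m = 1) (φ : M →ₗ[K] M) {v : ℕ → M} (hφ : ∀ n, φ (v n) = v (n + 1)) (hv : v m = v 0) :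
    φ (∑ n ∈ Finset.range m, (μ ^ n)⁻¹ • v n) = μ • ∑ n ∈ Finset.range m, (μ ^ n)⁻¹ • v n := by
  rcases eq_or_ne m 0 with rfl | hm
  · simp
  have μ_ne_zero : μ ≠ 0 := (IsUnit.of_pow_eq_one hμ hm).ne_zero
  have shift : ∑ n ∈ Finset.range m, (μ ^ (n + 1))⁻¹ • v (n + 1) =
      ∑ n ∈ Finset.range m, (μ ^ n)⁻¹ • v n := by
    have sum_range_succ_eq := (Finset.sum_range_succ' (fun n => (μ ^ n)⁻¹ • v n) m).symm.trans
      (Finset.sum_range_succ (fun n => (μ ^ n)⁻¹ • v n) m)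
    rw [hμ, hv, pow_zero] at sum_range_succ_eq
    exact add_right_cancel sum_range_succ_eq
  calc φ (∑ n ∈ Finset.range m, (μ ^ n)⁻¹ • v n)
      = ∑ n ∈ Finset.range m, (μ ^ n)⁻¹ • v (n + 1) := by simp only [map_sum, map_smul, hφ]
    _ = μ • ∑ n ∈ Finset.range m, (μ ^ (n + 1))⁻¹ • v (n + 1) := by
      simp only [Finset.smul_sum, smul_smul, pow_succ', mul_inv, mul_inv_cancel_left₀ μ_ne_zero]
    _ = μ • ∑ n ∈ Finset.range m, (μ ^ n)⁻¹ • v n := by rw [shift]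

end Fourier

section BasisMap

variable {𝕜 H α : Type*} [RCLike 𝕜] [NormedAddCommGroup H] [InnerProductSpace 𝕜 H]

/-- The operator `A` sends the vector of index `r` of the Hilbert basis `e` to the one of index
`f r`. Relations between such operators reduce to relations between the maps `f`. -/
def MapsBasis (e : HilbertBasis α 𝕜 H) (A : H →L[𝕜] H) (f : α → α) : Prop :=
  ∀ r, A (e r) = e (f r)

theorem ext_hilbertBasis (e : HilbertBasis α 𝕜 H) {A B : H →L[𝕜] H}
    (h : ∀ r, A (e r) = B (e r)) : A = B :=
  ContinuousLinearMap.ext_on (Submodule.dense_iff_topologicalClosure_eq_top.mpr e.dense_span)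
    (Set.forall_mem_range.mpr h)

namespace MapsBasis

variable {e : HilbertBasis α 𝕜 H} {A B : H →L[𝕜] H} {f g : α → α}

theorem mul (hA : MapsBasis e A f) (hB : MapsBasis e B g) : MapsBasis e (A * B) (f ∘ g) :=
  fun r => (congrArg A (hB r)).trans (hA (g r))

theorem unique (hA : MapsBasis e A f) (hB : MapsBasis e B f) : A = B :=
  ext_hilbertBasis e fun r => (hA r).trans (hB r).symm

variable [CompleteSpace H]

theorem star_apply {ι : Type*} [DecidableEq ι] {V : ι → H →L[𝕜] H} {f : ι → α → α}
    (hV : ∀ i, MapsBasis e (V i) (f i)) (hf : Function.Injective (Function.uncurry f))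
    (i j : ι) (r : α) : star (V i) (e (f j r)) = if i = j then e r else 0 := by
  apply e.repr.injective
  ext s
  have index_eq_iff : f i s = f j r ↔ i = j ∧ s = r :=
    (hf.eq_iff (a := (i, s)) (b := (j, r))).trans Prod.mk_inj
  rw [e.repr_apply_apply, e.repr_apply_apply, ContinuousLinearMap.star_eq_adjoint,
    ContinuousLinearMap.adjoint_inner_right, hV i, orthonormal_iff_ite.mp e.orthonormal]
  simp only [index_eq_iff]
  by_cases hij : i = j
  · simp only [hij, true_and, if_true, orthonormal_iff_ite.mp e.orthonormal]
  · rw [if_neg hij, if_neg fun h => hij h.1, inner_zero_right]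

theorem isCuntzFamily {ι : Type*} [Fintype ι] [DecidableEq ι] {V : ι → H →L[𝕜] H} {f : ι → α → α}
    (hV : ∀ i, MapsBasis e (V i) (f i)) (hf : Function.Bijective (Function.uncurry f)) :
    IsCuntzFamily V where
  star_mul i j := ext_hilbertBasis e fun r => by
    rw [mul_apply_eq_comp, hV j, star_apply hV hf.injective]
    split_ifs <;> rfl
  sum_mul_star := ext_hilbertBasis e fun t => by
    obtain ⟨⟨j, r⟩, rfl⟩ := hf.surjective t
    simp [Function.uncurry, star_apply hV hf.injective, apply_ite, hV j r]

theorem mul_star_self (hA : MapsBasis e A f) (hf : Function.Bijective f) : A * star A = 1 := by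
  have singleton : IsCuntzFamily fun _ : Unit => A :=
    isCuntzFamily (fun _ => hA) (hf.comp (Equiv.punitProd α).bijective)
  simpa using singleton.sum_mul_star

theorem conj_eq (hA : MapsBasis e A f) (hf : Function.Bijective f) (hB : MapsBasis e B g)
    {B' : H →L[𝕜] H} {g' : α → α} (hB' : MapsBasis e B' g') (hfg : f ∘ g = g' ∘ f) :
    A * B * star A = B' := by
  have semiconj : A * B = B' * A := (hA.mul hB).unique (hfg ▸ hB'.mul hA)
  rw [semiconj, mul_assoc, hA.mul_star_self hf, mul_one]

end MapsBasis

end BasisMap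

section Digits

theorem bijective_C_add_X_mul (R : Type*) [Semiring R] :
    Function.Bijective fun p : R × R[X] => C p.1 + X * p.2 := by
  refine Function.bijective_iff_has_inverse.mpr
    ⟨fun p => (p.coeff 0, p.divX), fun p => ?_, fun p => (add_comm _ _).trans (X_mul_divX_add p)⟩
  ext <;> simp [coeff_divX]

theorem bijective_uncurry_C_add_X_mul {ι R : Type*} [Semiring R] {d : ι → R}
    (hd : Function.Bijective d) :
    Function.Bijective (Function.uncurry fun i (r : R[X]) => C (d i) + X * r) := by
  have factorization : (Function.uncurry fun i (r : R[X]) => C (d i) + X * r) =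
      (fun p : R × R[X] => C p.1 + X * p.2) ∘ Prod.map d id := rfl
  rw [factorization]
  exact (bijective_C_add_X_mul R).comp (hd.prodMap Function.bijective_id)

theorem bijective_C_mul {R : Type*} [Semiring R] (b : Rˣ) :
    Function.Bijective fun r : R[X] => C (b : R) * r :=
  (Units.map (C : R →+* R[X]).toMonoidHom b).mulLeft_bijective

theorem bijective_sumElim_zero_pow {G₀ : Type*} [GroupWithZero G₀] {b : G₀ˣ}
    (hb : ∀ u : G₀ˣ, u ∈ Subgroup.zpowers b) (hfin : IsOfFinOrder b) {m : ℕ} (hm : orderOf b = m) :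
    Function.Bijective
      (Sum.elim (fun _ : Unit => (0 : G₀)) fun n : Fin m => ((b ^ (n : ℕ) : G₀ˣ) : G₀)) := by
  subst hm
  constructor
  · refine Function.Injective.sumElim (Function.injective_of_subsingleton _) (fun n n' h => ?_)
      fun _ n => (b ^ (n : ℕ)).ne_zero.symm
    exact Fin.ext (pow_injOn_Iio_orderOf n.2 n'.2 (Units.ext h))
  · intro a
    rcases eq_or_ne a 0 with rfl | ha
    · exact ⟨Sum.inl (), rfl⟩
    · refine ⟨Sum.inr ((finEquivZPowers hfin).symm ⟨Units.mk0 a ha, hb _⟩), ?_⟩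
      rw [Sum.elim_inr, pow_finEquivZPowers_symm_apply, Units.val_mk0]

theorem orderOf_eq_card_sub_one {G₀ : Type*} [GroupWithZero G₀] [Fintype G₀] {b : G₀ˣ}
    (hb : ∀ u : G₀ˣ, u ∈ Subgroup.zpowers b) : orderOf b = Fintype.card G₀ - 1 := by
  rw [orderOf_eq_card_of_forall_mem_zpowers hb, Nat.card_eq_fintype_card, Fintype.card_units]

end Digits

section PolynomialOperators

/-- The canonical orthonormal basis `ξ_r = lp.single 2 r 1` of `ℓ²(F[T])`. -/
noncomputable def l2PolyBasis (F : Type*) [Field F] : HilbertBasis F[X] ℂ (l2Poly F) :=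
  HilbertBasis.ofRepr (LinearIsometryEquiv.refl ℂ _)

theorem l2PolyBasis_apply {F : Type*} [Field F] (r : F[X]) :
    l2PolyBasis F r = lp.single 2 r 1 :=
  ((l2PolyBasis F).repr_symm_single r).symm

theorem Wop_eq_sum_fourierMatrix_smul {F : Type*} [Field F] [Fintype F]
    (U S : F[X] → l2Poly F →L[ℂ] l2Poly F) (b : Fˣ) (ζ : ℂ) (k : Fin (Fintype.card F - 1)) :
    Wop F U S b ζ k = ∑ n : Fin (Fintype.card F - 1),
      fourierMatrix (Fintype.card F - 1) ζ n k • (U (C ((b ^ (n : ℕ) : Fˣ) : F)) * S X) := by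
  simp only [Wop, fourierMatrix, of_apply, Finset.sum_range, Finset.smul_sum, smul_smul,
    Nat.cast_pred Fintype.card_pos]

/-- `U` and `S` form the representation of the affine semigroup of `F[T]` on `ℓ²(F[T])`: `U a` is
translation by `a` and, for `c ≠ 0`, `S c` is multiplication by `c` on basis indices. -/
structure IsAffineRepresentation {F : Type*} [Field F] (U S : F[X] → l2Poly F →L[ℂ] l2Poly F) :
    Prop where
  translation : ∀ a, MapsBasis (l2PolyBasis F) (U a) (a + ·)
  multiplication : ∀ c, c ≠ 0 → MapsBasis (l2PolyBasis F) (S c) (c * ·)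

namespace IsAffineRepresentation

variable {F : Type*} [Field F] {U S : F[X] → l2Poly F →L[ℂ] l2Poly F}

theorem of_single (hU : ∀ a r : F[X], U a (lp.single 2 r 1) = lp.single 2 (a + r) 1)
    (hS : ∀ c : F[X], c ≠ 0 → ∀ r : F[X], S c (lp.single 2 r 1) = lp.single 2 (c * r) 1) :
    IsAffineRepresentation U S where
  translation a r := by simp only [l2PolyBasis_apply, hU]
  multiplication c hc r := by simp only [l2PolyBasis_apply, hS c hc]

theorem mapsBasis_translation_mul_X (h : IsAffineRepresentation U S) (a : F) :
    MapsBasis (l2PolyBasis F) (U (C a) * S X) fun r => C a + X * r :=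
  (h.translation (C a)).mul (h.multiplication X X_ne_zero)

theorem mapsBasis_multiplication_C (h : IsAffineRepresentation U S) (b : Fˣ) :
    MapsBasis (l2PolyBasis F) (S (C (b : F))) (C (b : F) * ·) :=
  h.multiplication _ (C_ne_zero.mpr b.ne_zero)

theorem conj_X (h : IsAffineRepresentation U S) (b : Fˣ) :
    S (C (b : F)) * S X * star (S (C (b : F))) = S X :=
  (h.mapsBasis_multiplication_C b).conj_eq (bijective_C_mul b) (h.multiplication X X_ne_zero)
    (h.multiplication X X_ne_zero) (funext fun _ => mul_left_comm _ _ _)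

theorem conj_translation_mul_X (h : IsAffineRepresentation U S) (b : Fˣ) (a : F) :
    S (C (b : F)) * (U (C a) * S X) * star (S (C (b : F))) = U (C (b * a)) * S X :=
  (h.mapsBasis_multiplication_C b).conj_eq (bijective_C_mul b) (h.mapsBasis_translation_mul_X a)
    (h.mapsBasis_translation_mul_X (b * a)) <| funext fun r => by
      simp only [Function.comp_apply, C_mul]
      ring

variable [Fintype F] {b : Fˣ} {ζ : ℂ}

theorem isCuntzFamily_translation_mul_X (h : IsAffineRepresentation U S)
    (hb : ∀ u : Fˣ, u ∈ Subgroup.zpowers b) :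
    IsCuntzFamily (Sum.elim (fun _ : Unit => S X)
      fun n : Fin (Fintype.card F - 1) => U (C ((b ^ (n : ℕ) : Fˣ) : F)) * S X) := by
  have digits_bijective := bijective_sumElim_zero_pow hb (isOfFinOrder_of_finite b)
    (orderOf_eq_card_sub_one hb)
  refine MapsBasis.isCuntzFamily (e := l2PolyBasis F) ?_
    (bijective_uncurry_C_add_X_mul digits_bijective)
  rintro (_ | n)
  · simpa using h.multiplication X X_ne_zero
  · exact h.mapsBasis_translation_mul_X _

theorem isCuntzFamily_Wop (h : IsAffineRepresentation U S)
    (hb : ∀ u : Fˣ, u ∈ Subgroup.zpowers b) (hζ : IsPrimitiveRoot ζ (Fintype.card F - 1)) :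
    IsCuntzFamily (Sum.elim (fun _ : Unit => S X)
      fun k : Fin (Fintype.card F - 1) => Wop F U S b ζ k) := by
  simp only [Wop_eq_sum_fourierMatrix_smul]
  exact (h.isCuntzFamily_translation_mul_X hb).sumElim_sum_smul (fourierMatrix_mem_unitaryGroup hζ)

theorem conj_Wop (h : IsAffineRepresentation U S) (hζ : ζ ^ (Fintype.card F - 1) = 1) (k : ℕ) :
    S (C (b : F)) * Wop F U S b ζ k * star (S (C (b : F))) = ζ ^ k • Wop F U S b ζ k := by
  let conj := LinearMap.mulLeftRight ℂ (S (C (b : F)), star (S (C (b : F))))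
  have conj_shift (n : ℕ) : conj (U (C ((b ^ n : Fˣ) : F)) * S X) =
      U (C ((b ^ (n + 1) : Fˣ) : F)) * S X := by
    rw [pow_succ', Units.val_mul]
    exact h.conj_translation_mul_X b _
  have b_pow : b ^ (Fintype.card F - 1) = 1 := by rw [← Fintype.card_units, pow_card_eq_one]
  have root_pow : (ζ ^ k) ^ (Fintype.card F - 1) = 1 := by rw [pow_right_comm, hζ, one_pow]
  have eigenvector := map_sum_inv_pow_smul root_pow conj conj_shift (by rw [b_pow, pow_zero])
  change conj (Wop F U S b ζ k) = _
  simp only [Wop, pow_mul]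
  rw [map_smul, eigenvector, smul_comm]

end IsAffineRepresentation

end PolynomialOperators

/-- With `b` a generator of `Fˣ` and `ζ` a primitive `(q-1)`-th root of unity, the operators
`S_T, W_0, …, W_{q-2}` on `ℓ²(F[T])` are `q` isometries whose range projections are mutually
orthogonal and sum to the identity, and conjugation by the unitary `S_b` fixes `S_T` and
multiplies `W_k` by `ζ^k`. -/
theorem cuntz_algebra_diagonalized_relations (F : Type*) [Field F] [Fintype F]
    (b : Fˣ) (hb : ∀ u : Fˣ, u ∈ Subgroup.zpowers b)
    (ζ : ℂ) (hζ : IsPrimitiveRoot ζ (Fintype.card F - 1))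
    (U : Polynomial F → (l2Poly F →L[ℂ] l2Poly F))
    (S : Polynomial F → (l2Poly F →L[ℂ] l2Poly F))
    (hU : ∀ a r : Polynomial F, U a (lp.single 2 r 1) = lp.single 2 (a + r) 1)
    (hS : ∀ c : Polynomial F, c ≠ 0 → ∀ r : Polynomial F,
      S c (lp.single 2 r 1) = lp.single 2 (c * r) 1) :
    (ContinuousLinearMap.adjoint (S Polynomial.X) * S Polynomial.X = 1) ∧
    (∀ k < Fintype.card F - 1,
      ContinuousLinearMap.adjoint (Wop F U S b ζ k) * Wop F U S b ζ k = 1) ∧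
    (∀ k < Fintype.card F - 1,
      (S Polynomial.X * ContinuousLinearMap.adjoint (S Polynomial.X)) *
        (Wop F U S b ζ k * ContinuousLinearMap.adjoint (Wop F U S b ζ k)) = 0) ∧
    (∀ k < Fintype.card F - 1, ∀ l < Fintype.card F - 1, k ≠ l →
      (Wop F U S b ζ k * ContinuousLinearMap.adjoint (Wop F U S b ζ k)) *
        (Wop F U S b ζ l * ContinuousLinearMap.adjoint (Wop F U S b ζ l)) = 0) ∧
    (S Polynomial.X * ContinuousLinearMap.adjoint (S Polynomial.X) +
      ∑ k ∈ Finset.range (Fintype.card F - 1),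
        Wop F U S b ζ k * ContinuousLinearMap.adjoint (Wop F U S b ζ k) = 1) ∧
    (S (Polynomial.C (b : F)) * S Polynomial.X *
        ContinuousLinearMap.adjoint (S (Polynomial.C (b : F))) = S Polynomial.X) ∧
    (∀ k < Fintype.card F - 1,
      S (Polynomial.C (b : F)) * Wop F U S b ζ k *
          ContinuousLinearMap.adjoint (S (Polynomial.C (b : F))) =
        ζ ^ k • Wop F U S b ζ k) := by
  have hrep : IsAffineRepresentation U S := .of_single hU hS
  have hW := hrep.isCuntzFamily_Wop hb hζ
  simp only [← ContinuousLinearMap.star_eq_adjoint]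
  refine ⟨hW.star_mul_self (.inl ()), fun k hk => hW.star_mul_self (.inr ⟨k, hk⟩),
    fun k hk => hW.range_mul_range_of_ne (i := .inl ()) (j := .inr ⟨k, hk⟩) Sum.inl_ne_inr,
    fun k hk l hl hkl => hW.range_mul_range_of_ne (i := .inr ⟨k, hk⟩) (j := .inr ⟨l, hl⟩) ?_,
    ?_, hrep.conj_X b, fun k _ => hrep.conj_Wop hζ.pow_eq_one k⟩
  · simpa using hkl
  · simpa [Finset.sum_range] using hW.sum_mul_star
end

section
/- Let q ≥ 2 be an integer and let A : ℤ^{q−1} → ℤ^{q−1} be the additive endomorphism given by the matrix with all diagonal entries 2 and all off-diagonal entries 1, i.e. A(x) = x + (Σ_i x_i)·𝟙 where 𝟙 is the all-ones vector. Then the direct limit (colimit) of the sequence ℤ^{q−1} →A→ ℤ^{q−1} →A→ ℤ^{q−1} →A→ ⋯ indexed by ℕ is isomorphic, as an abelian group, to ℤ[1/q] ⊕ ℤ^{q−2}, where ℤ[1/q] denotes the additive group of the localization of ℤ at the powers of q. -/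
/-!
In the coordinates `a = x 0` and `d i = x (i + 1) - x 0`, the map `A` becomes the shear
`(a, d) ↦ (q • a + ∑ i, d i, d)`. It is not diagonalizable over `ℤ` when `q > 2`, but the
sequence can be diagonalized one level at a time: replacing `a` at level `k` by
`a - (1 + q + ⋯ + q ^ (k - 1)) • ∑ i, d i` turns every connecting map into `(a, d) ↦ (q • a, d)`.
The limit of multiplication by `q` is the localization away from `q`.
-/

/-- The endomorphism of `ℤ^{q-1}` given by the matrix with diagonal entries `2` and
off-diagonal entries `1`, i.e. `A x = x + (Σ_i x_i)·𝟙`. -/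
def allOnesPlusIdEnd (q : ℕ) : AddMonoid.End (Fin (q - 1) → ℤ) :=
  { toFun := fun x => fun j => x j + ∑ i, x i
    map_zero' := by funext j; simp
    map_add' := fun x y => by
      funext j
      simp [Finset.sum_add_distrib]
      ring }

/-- The direct limit of the sequence `G → G → G → ⋯` in which every connecting map is `T`. -/
abbrev IterateLimit {G : Type*} [AddCommMonoid G] (T : AddMonoid.End G) : Type _ :=
  AddCommGroup.DirectLimit (fun _ : ℕ => G) fun i j _ => show G →+ G from T ^ (j - i)

namespace IterateLimit

variable {G H : Type*} [AddCommMonoid H]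

section AddCommMonoid

variable [AddCommMonoid G] {T : AddMonoid.End G}

theorem semiconj_pow {S : AddMonoid.End H} {e : G → H} (h : Function.Semiconj e T S) (n : ℕ) :
    Function.Semiconj e (T ^ n : AddMonoid.End G) (S ^ n : AddMonoid.End H) := by
  simpa only [AddMonoid.End.coe_pow] using h.iterate_right n

/-- Conjugate endomorphisms have isomorphic direct limits. -/
noncomputable def congr {S : AddMonoid.End H} (e : G ≃+ H) (h : Function.Semiconj e T S) :
    IterateLimit T ≃+ IterateLimit S :=
  AddCommGroup.DirectLimit.congr (fun _ => e) fun i j _ =>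
    AddMonoidHom.ext (semiconj_pow h (j - i))

theorem levelMap_add_pow_apply {g : ℕ → G →+ H} (compat : ∀ k x, g (k + 1) (T x) = g k x)
    (k n : ℕ) (x : G) : g (k + n) ((T ^ n) x) = g k x := by
  induction n with
  | zero => rfl
  | succ n ih => rw [pow_succ', ← add_assoc, AddMonoid.End.coe_mul, Function.comp_apply, compat, ih]

theorem of_eq_zero_of_pow_apply_eq_zero {k n : ℕ} {x : G} (h : (T ^ n) x = 0) :
    (AddCommGroup.DirectLimit.of _ _ k x : IterateLimit T) = 0 := by
  rw [← AddCommGroup.DirectLimit.of_f (Nat.le_add_right k n), Nat.add_sub_cancel_left]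
  exact (congrArg _ h).trans (map_zero _)

end AddCommMonoid

/-- A compatible family of maps `g k : G →+ H` identifies the direct limit with `H` as soon as
the family is jointly surjective and each kernel consists of elements killed by a power of `T`. -/
noncomputable def equivOfLevelMaps [AddCommGroup G] {T : AddMonoid.End G} (g : ℕ → G →+ H)
    (compat : ∀ k x, g (k + 1) (T x) = g k x)
    (ker_le : ∀ k x, g k x = 0 → ∃ n : ℕ, (T ^ n) x = 0)
    (surj : ∀ y, ∃ k x, g k x = y) : IterateLimit T ≃+ H :=
  have compat_of_le (i j : ℕ) (hij : i ≤ j) (x : G) : g j ((T ^ (j - i)) x) = g i x := by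
    simpa only [Nat.add_sub_cancel' hij] using levelMap_add_pow_apply compat i (j - i) x
  AddEquiv.ofBijective (AddCommGroup.DirectLimit.lift _ _ H g compat_of_le) <| by
    constructor
    · refine (injective_iff_map_eq_zero _).2 fun z hz => ?_
      induction z using AddCommGroup.DirectLimit.induction_on with
      | ih k x =>
        obtain ⟨n, hn⟩ := ker_le k x ((AddCommGroup.DirectLimit.lift_of ..).symm.trans hz)
        exact of_eq_zero_of_pow_apply_eq_zero hn
    · intro y
      obtain ⟨k, x, rfl⟩ := surj y
      exact ⟨AddCommGroup.DirectLimit.of _ _ k x, AddCommGroup.DirectLimit.lift_of ..⟩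

end IterateLimit

section Shear

variable {R M M' N : Type*} [CommRing R] [AddCommGroup M] [Module R M] [AddCommGroup M']
  [Module R M'] [AddCommGroup N] (r : R) (φ : N →+ M)

/-- The endomorphism `(a, d) ↦ (r • a + φ d, d)` of `M × N`, an extension of the identity of `N`
by multiplication by `r` on `M`. -/
def shearEnd : AddMonoid.End (M × N) :=
  ((DistribSMul.toAddMonoidHom M r).coprod φ).prod (AddMonoidHom.snd M N)

theorem shearEnd_apply (p : M × N) : shearEnd r φ p = (r • p.1 + φ p.2, p.2) := rfl

theorem shearEnd_pow_apply_inl (n : ℕ) (a : M) :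
    (shearEnd r φ ^ n) (a, (0 : N)) = (r ^ n • a, 0) := by
  induction n with
  | zero => simp
  | succ n ih =>
    rw [pow_succ', AddMonoid.End.coe_mul, Function.comp_apply, ih, shearEnd_apply, map_zero,
      add_zero, smul_smul, pow_succ']

variable (f : M →ₗ[R] M') [IsLocalizedModule (Submonoid.powers r) f]

/-- The map from the `k`-th term of the sequence of shears to its limit `M[1/r] × N`: undo the
accumulated translation `(1 + r + ⋯ + r ^ (k - 1)) • φ d` and divide by `r ^ k`. -/
noncomputable def shearLevelMap (k : ℕ) : M × N →+ M' × N :=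
  AddMonoidHom.mk' (fun p => (IsLocalizedModule.mk' f
      (p.1 - (∑ i ∈ Finset.range k, r ^ i) • φ p.2) (Submonoid.pow r k), p.2)) fun _ _ => by
    simp only [Prod.fst_add, Prod.snd_add, map_add, smul_add, add_sub_add_comm,
      IsLocalizedModule.mk'_add, Prod.mk_add_mk]

theorem shearLevelMap_apply (k : ℕ) (p : M × N) :
    shearLevelMap r φ f k p = (IsLocalizedModule.mk' f
      (p.1 - (∑ i ∈ Finset.range k, r ^ i) • φ p.2) (Submonoid.pow r k), p.2) := rfl

theorem shearLevelMap_succ_shearEnd (k : ℕ) (p : M × N) :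
    shearLevelMap r φ f (k + 1) (shearEnd r φ p) = shearLevelMap r φ f k p := by
  have numerator_eq : r • p.1 + φ p.2 - (∑ i ∈ Finset.range (k + 1), r ^ i) • φ p.2 =
      Submonoid.pow r 1 • (p.1 - (∑ i ∈ Finset.range k, r ^ i) • φ p.2) := by
    rw [geom_sum_succ, Submonoid.smul_def, Submonoid.pow_coe]
    module
  have denominator_eq : Submonoid.pow r (k + 1) = Submonoid.pow r k * Submonoid.pow r 1 :=
    Subtype.ext (pow_add r k 1)
  simp only [shearLevelMap_apply, shearEnd_apply]
  rw [numerator_eq, denominator_eq, IsLocalizedModule.mk'_cancel_right]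

theorem exists_shearEnd_pow_apply_eq_zero {k : ℕ} {p : M × N}
    (hp : shearLevelMap r φ f k p = 0) : ∃ n : ℕ, (shearEnd r φ ^ n) p = 0 := by
  obtain ⟨a, d⟩ := p
  obtain ⟨hfst, rfl⟩ := Prod.mk_eq_zero.1 hp
  rw [map_zero, smul_zero, sub_zero, IsLocalizedModule.mk'_eq_zero'] at hfst
  obtain ⟨⟨_, n, rfl⟩, hn⟩ := hfst
  exact ⟨n, (shearEnd_pow_apply_inl r φ n a).trans (Prod.mk_eq_zero.2 ⟨hn, rfl⟩)⟩

theorem exists_shearLevelMap_eq (y : M' × N) : ∃ k p, shearLevelMap r φ f k p = y := by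
  obtain ⟨y, d⟩ := y
  obtain ⟨⟨a, _, k, rfl⟩, rfl⟩ := IsLocalizedModule.mk'_surjective (Submonoid.powers r) f y
  refine ⟨k, (a + (∑ i ∈ Finset.range k, r ^ i) • φ d, d), ?_⟩
  rw [shearLevelMap_apply, add_sub_cancel_right]
  rfl

/-- The direct limit of a shear does not depend on `φ`: it is `M[1/r] × N`. -/
noncomputable def shearLimitEquiv : IterateLimit (shearEnd r φ) ≃+ M' × N :=
  IterateLimit.equivOfLevelMaps (shearLevelMap r φ f) (shearLevelMap_succ_shearEnd r φ f)
    (fun _ _ => exists_shearEnd_pow_apply_eq_zero r φ f) (exists_shearLevelMap_eq r φ f)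

end Shear

section AddSum

variable {M : Type*}

/-- The endomorphism `x ↦ x + (∑ i, x i) • 𝟙` of `ι → M`: the matrix with diagonal entries `2`
and off-diagonal entries `1`, acting on vectors with entries in `M`. -/
def addSumEnd (ι M : Type*) [Fintype ι] [AddCommMonoid M] : AddMonoid.End (ι → M) where
  toFun x j := x j + ∑ i, x i
  map_zero' := by ext; simp
  map_add' x y := by
    ext
    simp only [Pi.add_apply, Finset.sum_add_distrib, add_add_add_comm]

theorem addSumEnd_apply {ι : Type*} [Fintype ι] [AddCommMonoid M] (x : ι → M) (j : ι) :
    addSumEnd ι M x j = x j + ∑ i, x i := rfl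

variable [AddCommGroup M] {m : ℕ}

/-- The coordinates `(x 0, i ↦ x (i + 1) - x 0)` on `M ^ (m + 1)`. The differences are chosen
because `addSumEnd` fixes them. -/
def headDiffEquiv (M : Type*) [AddCommGroup M] (m : ℕ) :
    (Fin (m + 1) → M) ≃+ M × (Fin m → M) where
  toFun x := (x 0, fun i => x i.succ - x 0)
  invFun p := Fin.cons p.1 fun i => p.2 i + p.1
  left_inv x := by
    ext j
    cases j using Fin.cases <;> simp
  right_inv p := by ext <;> simp
  map_add' x y := by ext <;> simp [add_sub_add_comm]

theorem headDiffEquiv_apply (x : Fin (m + 1) → M) :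
    headDiffEquiv M m x = (x 0, fun i => x i.succ - x 0) := rfl

theorem sum_eq_nsmul_head_add_sum_sub (x : Fin (m + 1) → M) :
    ∑ i, x i = (m + 1) • x 0 + ∑ i : Fin m, (x i.succ - x 0) := by
  rw [Fin.sum_univ_succ, Finset.sum_sub_distrib, Finset.sum_const, Finset.card_univ,
    Fintype.card_fin, succ_nsmul]
  abel

theorem headDiffEquiv_semiconj_addSumEnd (R : Type*) [CommRing R] [Module R M] :
    Function.Semiconj (headDiffEquiv M m) (addSumEnd (Fin (m + 1)) M)
      (shearEnd ((m + 2 : ℕ) : R) (∑ i : Fin m, Pi.evalAddMonoidHom (fun _ => M) i)) := by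
  intro x
  rw [shearEnd_apply, headDiffEquiv_apply, headDiffEquiv_apply]
  refine Prod.ext ?_ (funext fun i => add_sub_add_right_eq_sub ..)
  simp only [addSumEnd_apply, AddMonoidHom.finsetSum_apply, Pi.evalAddMonoidHom_apply,
    sum_eq_nsmul_head_add_sum_sub x, Nat.cast_smul_eq_nsmul]
  rw [succ_nsmul' (x 0) (m + 1), add_assoc]

-- The module structure on `M'` is read off from `f`: for a localization of `ℤ`, instance search
-- would find the one from `AddCommGroup`, which does not unify with the one from `Algebra`.
theorem directLimit_allOnesPlusId_iso_general (m : ℕ) {R M' : Type*} [CommRing R]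
    [Module R M] [AddCommGroup M'] {_ : Module R M'} (f : M →ₗ[R] M')
    [IsLocalizedModule (Submonoid.powers ((m + 2 : ℕ) : R)) f] :
    Nonempty (IterateLimit (addSumEnd (Fin (m + 1)) M) ≃+ M' × (Fin m → M)) :=
  ⟨(IterateLimit.congr (headDiffEquiv M m) (headDiffEquiv_semiconj_addSumEnd R)).trans
    (shearLimitEquiv _ _ f)⟩

end AddSum

/-- The direct limit of `ℤ^{q-1} →A→ ℤ^{q-1} →A→ ⋯` (all connecting maps equal to `A`,
`A` the matrix with diagonal `2` and off-diagonal `1`) is isomorphic as an abelian group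
to `ℤ[1/q] ⊕ ℤ^{q-2}`. -/
theorem directLimit_allOnesPlusId_iso (q : ℕ) (hq : 2 ≤ q) :
    Nonempty
      (AddCommGroup.DirectLimit (fun _ : ℕ => Fin (q - 1) → ℤ)
          (fun i j _ => show (Fin (q - 1) → ℤ) →+ (Fin (q - 1) → ℤ) from
              (allOnesPlusIdEnd q ^ (j - i) : AddMonoid.End (Fin (q - 1) → ℤ))) ≃+
        (Localization.Away (q : ℤ) × (Fin (q - 2) → ℤ))) := by
  obtain ⟨m, rfl⟩ := Nat.exists_eq_add_of_le' hq
  exact directLimit_allOnesPlusId_iso_general m (Algebra.linearMap ℤ (Localization.Away _))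
end

section
/- Let q ≥ 2 be an integer and let M := ℤ[1/q] × ℤ^{q−2}, where ℤ[1/q] is the additive group of the localization of ℤ at the powers of q. Define the additive endomorphism φ : M → M by φ(x, y) = (q⁻¹·(x − Σ_i y_i), y), where Σ_i y_i ∈ ℤ is viewed inside ℤ[1/q]. Then: (1) φ is an automorphism of M; (2) the image of id − φ equals ℤ[1/q] × {0}; (3) the kernel of id − φ equals {(x, y) ∈ M : (q−1)x + Σ_i y_i = 0}, and this kernel is a free abelian group of rank q−2 with basis the q−2 elements (1, −𝟙 − e_j) for j = 1, …, q−2, where 𝟙 ∈ ℤ^{q−2} is the all-ones vector and e_j the j-th standard basis vector. -/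
/-- The endomorphism `φ(x, y) = (q⁻¹·(x − Σ_i y_i), y)` of `M = ℤ[1/q] × ℤ^{q-2}`. -/
noncomputable def qDualBott (q : ℕ) :
    Localization.Away (q : ℤ) × (Fin (q - 2) → ℤ) →
      Localization.Away (q : ℤ) × (Fin (q - 2) → ℤ) :=
  fun m =>
    (IsLocalization.Away.invSelf (S := Localization.Away (q : ℤ)) (q : ℤ) *
        (m.1 - algebraMap ℤ (Localization.Away (q : ℤ)) (∑ i, m.2 i)),
      m.2)

/-!
Over any commutative ring `R`, with `a = |ι| + 2` in place of `q`, one has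
`(id - φ) (x, y) = (a⁻¹ * β (x, y), 0)` for `β (x, y) = (a - 1) x + ∑ i, y i`, so the range and the
kernel of `id - φ` are governed by `β : R[1/a] × R^ι → R[1/a]`. As `a - 1` is coprime to `a`, the
square formed by multiplication by `a - 1` on `R` and on `R[1/a]` is both cocartesian and cartesian.
The former says `R[1/a] = R + (a - 1) R[1/a]`, which makes `β` surjective (if `ι` is empty, then
`a - 1 = 1`). By the latter a pair `(x, y)` with `β (x, y) = 0` comes from a unique `k : R` with
`(a - 1) k + ∑ i, y i = 0`, and since `|ι| = a - 2` the coefficients of `(x, y)` in the vectors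
`(1, -𝟙 - e_j)` are forced to be `-k - y j`.
-/

section Localization

variable {R S : Type*} [CommRing R] [CommRing S] [Algebra R S] {a b : R} [IsLocalization.Away a S]

theorem exists_eq_algebraMap_add_algebraMap_mul_self (hab : IsCoprime a b) (x : S) :
    ∃ r v : R, x = algebraMap R S r + algebraMap R S (b * v) * x := by
  obtain ⟨n, p, hp⟩ := IsLocalization.Away.surj a x
  obtain ⟨u, v, huv⟩ := hab.pow_left (m := n)
  refine ⟨u * p, v, ?_⟩
  have huv' := congrArg (algebraMap R S) huv
  simp only [map_add, map_mul, map_pow, map_one] at huv' ⊢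
  linear_combination algebraMap R S u * hp - x * huv'

theorem exists_algebraMap_eq_of_mul_eq_algebraMap (hab : IsCoprime a b) {x : S} {r : R}
    (hx : algebraMap R S b * x = algebraMap R S r) : ∃ k : R, algebraMap R S k = x := by
  obtain ⟨p, v, hp⟩ := exists_eq_algebraMap_add_algebraMap_mul_self hab x
  refine ⟨p + v * r, ?_⟩
  simp only [map_add, map_mul] at hp ⊢
  linear_combination -hp - algebraMap R S v * hx

variable (S) in
theorem exists_mul_mul_eq_self_of_algebraMap_eq_zero (hab : IsCoprime a b) {d : R}
    (hd : algebraMap R S d = 0) : ∃ v : R, v * b * d = d := by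
  obtain ⟨⟨_, n, rfl⟩, hn⟩ := (IsLocalization.map_eq_zero_iff (Submonoid.powers a) S d).1 hd
  obtain ⟨u, v, huv⟩ := hab.pow_left (m := n)
  exact ⟨v, by linear_combination d * huv - u * hn⟩

theorem existsUnique_algebraMap_eq_and_mul_eq (hab : IsCoprime a b) {x : S} {r : R}
    (hx : algebraMap R S b * x = algebraMap R S r) :
    ∃! k : R, algebraMap R S k = x ∧ b * k = r := by
  obtain ⟨k, rfl⟩ := exists_algebraMap_eq_of_mul_eq_algebraMap hab hx
  have hd : algebraMap R S (b * k - r) = 0 := by rw [map_sub, map_mul, hx, sub_self]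
  obtain ⟨v, hv⟩ := exists_mul_mul_eq_self_of_algebraMap_eq_zero S hab hd
  refine ⟨k - v * (b * k - r), ⟨?_, by linear_combination -hv⟩, ?_⟩
  · rw [map_sub, map_mul, hd, mul_zero, sub_zero]
  · rintro l ⟨hl, hbl⟩
    have hlk : algebraMap R S (l - (k - v * (b * k - r))) = 0 := by
      rw [map_sub, map_sub, map_mul, hd, hl, mul_zero, sub_zero, sub_self]
    obtain ⟨w, hw⟩ := exists_mul_mul_eq_self_of_algebraMap_eq_zero S hab hlk
    linear_combination w * hbl - hw + w * hv

end Localization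

section DualBott

variable {R S ι : Type*} [CommRing R] [CommRing S] [Algebra R S] [Fintype ι] (a : R)

/-- The map `φ (x, y) = (a⁻¹ (x - ∑ i, y i), y)` on `R[1/a] × R^ι`, for an arbitrary commutative
ring `R` and a finite type `ι`; `qDualBott q` is the case `R = ℤ`, `a = q`, `ι = Fin (q - 2)`. -/
noncomputable def dualBott [IsLocalization.Away a S] : S × (ι → R) →ₗ[R] S × (ι → R) where
  toFun m := (IsLocalization.Away.invSelf a * (m.1 - algebraMap R S (∑ i, m.2 i)), m.2)
  map_add' u v := by
    ext
    · simp only [Prod.fst_add, Prod.snd_add, Pi.add_apply, Finset.sum_add_distrib, map_add]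
      ring
    · rfl
  map_smul' r m := by
    ext
    · simp only [Prod.smul_fst, Prod.smul_snd, Pi.smul_apply, smul_eq_mul, ← Finset.mul_sum,
        map_mul, Algebra.smul_def (A := S), RingHom.id_apply]
      ring
    · rfl

theorem dualBott_bijective [IsLocalization.Away a S] :
    Function.Bijective (dualBott a : S × (ι → R) →ₗ[R] S × (ι → R)) := by
  have hinv := IsLocalization.Away.mul_invSelf (S := S) a
  refine Function.bijective_iff_has_inverse.2
    ⟨fun m => (algebraMap R S a * m.1 + algebraMap R S (∑ i, m.2 i), m.2), fun m => ?_, fun m => ?_⟩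
  · exact Prod.ext (by
      simp only [dualBott, LinearMap.coe_mk, AddHom.coe_mk]
      linear_combination (m.1 - algebraMap R S (∑ i, m.2 i)) * hinv) rfl
  · exact Prod.ext (by
      simp only [dualBott, LinearMap.coe_mk, AddHom.coe_mk]
      linear_combination m.1 * hinv) rfl

/-- The form `β (x, y) = (a - 1) x + ∑ i, y i` on `R[1/a] × R^ι`, whose zeros are the fixed points
of `dualBott a`. -/
def dualBottForm (m : S × (ι → R)) : S :=
  algebraMap R S (a - 1) * m.1 + algebraMap R S (∑ i, m.2 i)

/-- The vector `(1, -𝟙 - e_j)` of `S × R^ι`; over `S = R[1/a]` with `a = |ι| + 2` these form a basis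
of the fixed points of `dualBott a`. -/
def dualBottFixedVector [DecidableEq ι] (j : ι) : S × (ι → R) :=
  (1, fun i => -1 - if i = j then 1 else 0)

theorem sum_smul_dualBottFixedVector [DecidableEq ι] (c : ι → R) :
    ∑ j, c j • dualBottFixedVector (S := S) j =
      (algebraMap R S (∑ j, c j), fun i => -(∑ j, c j) - c i) := by
  ext i
  · simp [dualBottFixedVector, Prod.fst_sum, Algebra.smul_def]
  · simp [dualBottFixedVector, Prod.snd_sum, mul_sub, Finset.sum_sub_distrib]

theorem sum_neg_sub (s : R) (c : ι → R) :
    ∑ i, (-s - c i) = -(Fintype.card ι * s + ∑ i, c i) := by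
  simp only [Finset.sum_sub_distrib, Finset.sum_const, Finset.card_univ, nsmul_eq_mul]
  ring

variable {a}

theorem dualBottForm_dualBottFixedVector [DecidableEq ι] (ha : a = Fintype.card ι + 2) (j : ι) :
    dualBottForm a (dualBottFixedVector (S := S) j) = 0 := by
  have hsum : ∑ i, (-1 - if i = j then 1 else 0 : R) = -(a - 1) := by
    rw [sum_neg_sub, Finset.sum_ite_eq' Finset.univ j, if_pos (Finset.mem_univ j), ha]
    ring
  simp only [dualBottForm, dualBottFixedVector, hsum, mul_one, map_neg, add_neg_cancel]

variable [IsLocalization.Away a S]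

theorem dualBottForm_surjective (ha : a = Fintype.card ι + 2) :
    Function.Surjective (dualBottForm a : S × (ι → R) → S) := by
  classical
  intro w
  rcases isEmpty_or_nonempty ι with hι | ⟨⟨i⟩⟩
  · have ha' : a - 1 = 1 := by rw [ha, Fintype.card_eq_zero]; ring
    exact ⟨(w, 0), by simp [dualBottForm, ha']⟩
  · have hcoprime : IsCoprime a (a - 1) := .sub_one_right_of_dvd dvd_rfl
    obtain ⟨r, v, hw⟩ := exists_eq_algebraMap_add_algebraMap_mul_self hcoprime w
    refine ⟨(algebraMap R S v * w, Pi.single i r), ?_⟩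
    rw [dualBottForm, Fintype.sum_pi_single', ← mul_assoc, ← map_mul, add_comm, ← hw]

theorem existsUnique_eq_sum_smul_dualBottFixedVector [DecidableEq ι]
    (ha : a = Fintype.card ι + 2) {m : S × (ι → R)} (hm : dualBottForm a m = 0) :
    ∃! c : ι → R, m = ∑ j, c j • dualBottFixedVector j := by
  obtain ⟨x, y⟩ := m
  have hx : algebraMap R S (a - 1) * x = algebraMap R S (-∑ i, y i) := by
    rw [map_neg]
    exact eq_neg_of_add_eq_zero_left hm
  have hcoprime : IsCoprime a (a - 1) := .sub_one_right_of_dvd dvd_rfl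
  obtain ⟨k, ⟨rfl, hk⟩, hk_unique⟩ := existsUnique_algebraMap_eq_and_mul_eq hcoprime hx
  simp only [sum_smul_dualBottFixedVector, Prod.mk.injEq]
  refine ⟨fun i => -k - y i, ?_, ?_⟩
  · have hsum : ∑ i, (-k - y i) = k := by
      rw [sum_neg_sub]
      linear_combination k * ha - hk
    simp only [hsum, sub_sub_cancel, true_and]
  · rintro c ⟨hkc, rfl⟩
    have hsum : ∑ j, c j = k := by
      refine hk_unique _ ⟨hkc.symm, ?_⟩
      rw [sum_neg_sub]
      linear_combination (∑ j, c j) * ha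
    simp only [hsum, sub_sub_cancel]

variable (a)

theorem sub_dualBott (m : S × (ι → R)) :
    m - dualBott a m = (IsLocalization.Away.invSelf a * dualBottForm a m, 0) := by
  have hinv := IsLocalization.Away.mul_invSelf (S := S) a
  refine Prod.ext ?_ (sub_self m.2)
  simp only [dualBott, dualBottForm, LinearMap.coe_mk, AddHom.coe_mk, Prod.fst_sub, map_sub,
    map_one]
  linear_combination -m.1 * hinv

theorem sub_dualBott_eq_zero_iff (m : S × (ι → R)) :
    m - dualBott a m = 0 ↔ dualBottForm a m = 0 := by
  have hunit : IsUnit (IsLocalization.Away.invSelf (S := S) a) :=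
    .of_mul_eq_one_right _ (IsLocalization.Away.mul_invSelf a)
  rw [sub_dualBott, Prod.mk_eq_zero, hunit.mul_right_eq_zero, and_iff_left rfl]

variable {a}

theorem range_sub_dualBott (ha : a = Fintype.card ι + 2) :
    Set.range (fun m : S × (ι → R) => m - dualBott a m) = {m | m.2 = 0} := by
  ext ⟨w, y⟩
  simp only [sub_dualBott, Set.mem_range, Set.mem_ofPred_eq, Prod.mk.injEq]
  refine ⟨fun ⟨_, _, hy⟩ => hy.symm, fun hy => ?_⟩
  obtain ⟨m, hm⟩ := dualBottForm_surjective ha (algebraMap R S a * w)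
  refine ⟨m, ?_, hy.symm⟩
  rw [hm]
  linear_combination w * IsLocalization.Away.mul_invSelf (S := S) a

theorem qDualBott_automorphism_range_ker_general [DecidableEq ι] (ha : a = Fintype.card ι + 2) :
    Function.Bijective (dualBott a : S × (ι → R) →ₗ[R] S × (ι → R)) ∧
    Set.range (fun m : S × (ι → R) => m - dualBott a m) = {m | m.2 = 0} ∧
    {m : S × (ι → R) | m - dualBott a m = 0} =
      {m | algebraMap R S (a - 1) * m.1 + algebraMap R S (∑ i, m.2 i) = 0} ∧
    (∀ j : ι, dualBottFixedVector (S := S) (R := R) j - dualBott a (dualBottFixedVector j) = 0) ∧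
    (∀ m : S × (ι → R), m - dualBott a m = 0 →
      ∃! c : ι → R, m = ∑ j, c j • dualBottFixedVector j) :=
  ⟨dualBott_bijective a, range_sub_dualBott ha, Set.ext (sub_dualBott_eq_zero_iff a),
    fun j => (sub_dualBott_eq_zero_iff a _).2 (dualBottForm_dualBottFixedVector ha j),
    fun m hm => existsUnique_eq_sum_smul_dualBottFixedVector ha
      ((sub_dualBott_eq_zero_iff a m).1 hm)⟩

end DualBott

/-- For `M = ℤ[1/q] × ℤ^{q-2}` and `φ(x,y) = (q⁻¹(x − Σ y_i), y)`: `φ` is an additive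
automorphism of `M`; the image of `id − φ` is `ℤ[1/q] × {0}`; and the kernel of `id − φ` is
`{(x,y) : (q−1)x + Σ y_i = 0}`, which is free abelian of rank `q−2` with basis the elements
`(1, −𝟙 − e_j)`, `j = 1, …, q−2`. -/
theorem qDualBott_automorphism_range_ker (q : ℕ) (hq : 2 ≤ q) :
    (∀ u v, qDualBott q (u + v) = qDualBott q u + qDualBott q v) ∧
    Function.Bijective (qDualBott q) ∧
    Set.range (fun m => m - qDualBott q m) =
      {m : Localization.Away (q : ℤ) × (Fin (q - 2) → ℤ) | m.2 = 0} ∧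
    {m : Localization.Away (q : ℤ) × (Fin (q - 2) → ℤ) | m - qDualBott q m = 0} =
      {m | algebraMap ℤ (Localization.Away (q : ℤ)) ((q : ℤ) - 1) * m.1 +
          algebraMap ℤ (Localization.Away (q : ℤ)) (∑ i, m.2 i) = 0} ∧
    (∀ j : Fin (q - 2),
      ((1 : Localization.Away (q : ℤ)), fun i => -1 - if i = j then 1 else 0) -
        qDualBott q ((1 : Localization.Away (q : ℤ)),
          fun i => -1 - if i = j then 1 else 0) = 0) ∧
    (∀ m : Localization.Away (q : ℤ) × (Fin (q - 2) → ℤ), m - qDualBott q m = 0 →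
      ∃! c : Fin (q - 2) → ℤ,
        m = ∑ j : Fin (q - 2),
          c j • (((1 : Localization.Away (q : ℤ)),
            fun i => -1 - if i = j then 1 else 0) :
              Localization.Away (q : ℤ) × (Fin (q - 2) → ℤ))) := by
  have hcard : (q : ℤ) = Fintype.card (Fin (q - 2)) + 2 := by rw [Fintype.card_fin]; omega
  -- `•` in the goal is `zsmul`, which on `Localization` is only propositionally the algebra action.
  simp only [← int_smul_eq_zsmul
    (@Prod.instModule ℤ (Localization.Away (q : ℤ)) (Fin (q - 2) → ℤ) _ _ _ Algebra.toModule _)]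
  exact ⟨map_add (dualBott (q : ℤ)),
    qDualBott_automorphism_range_ker_general (S := Localization.Away (q : ℤ)) hcard⟩
end
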